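/- Let (A, *, ≻) be a dipterous algebra over a field K and let M_{pq} be the multibrace operations defined recursively from the dipterous structure: with ω^≻(a₁,…,a_k) := ((a₁≻a₂)≻…)≻a_k, set M_{00}=0, M_{10}=M_{01}=id, M_{p0}=0=M_{0q} for p,q ≥ 2, and for p,q ≥ 1, M_{pq}(x₁,…,x_p; y₁,…,y_q) := ω^≻(x₁,…,x_p) * ω^≻(y₁,…,y_q) − Σ_{k=2}^{p+q} Σ ω^≻( M_{i₁j₁}(x¹;y¹), …, M_{i_kj_k}(x^k;y^k) ), the inner sum over sequences (i₁,…,i_k), (j₁,…,j_k) of nonnegative integers with i₁+…+i_k = p, j₁+…+j_k = q and i_t + j_t ≥ 1, with consecutive blocks x^t, y^t. Then for all n ≥ 1, m ≥ 2 and all x₁,…,x_n, y₁,…,y_m ∈ A: M_{nm}(x₁,…,x_n; y₁,…,y_m) = M_{n(m−1)}( x₁,…,x_n ; (y₁≻y₂), y₃, …, y_m ) − y₁ ≻ M_{n(m−1)}( x₁,…,x_n ; y₂, …, y_m ). -/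

import Mathlib

open Finset

/-- The set of pairs of sequences `(i₁,…,i_k)`, `(j₁,…,j_k)` of nonnegative integers with
`i₁+⋯+i_k = p`, `j₁+⋯+j_k = q` and `i_t + j_t ≥ 1` for all `t`, encoded as functions
`Fin k → ℕ × ℕ`. -/
def Comps (k p q : ℕ) : Finset (Fin k → ℕ × ℕ) :=
  (Fintype.piFinset fun _ : Fin k => Finset.range (p + 1) ×ˢ Finset.range (q + 1)).filter
    fun c => (∑ t, (c t).1) = p ∧ (∑ t, (c t).2) = q ∧ ∀ t, 1 ≤ (c t).1 + (c t).2

/-- Offset of the `t`-th consecutive block in the first family of variables. -/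
def off1 {k : ℕ} (c : Fin k → ℕ × ℕ) (t : Fin k) : ℕ :=
  ∑ u ∈ Finset.univ.filter (fun u => u < t), (c u).1

/-- Offset of the `t`-th consecutive block in the second family of variables. -/
def off2 {k : ℕ} (c : Fin k → ℕ × ℕ) (t : Fin k) : ℕ :=
  ∑ u ∈ Finset.univ.filter (fun u => u < t), (c u).2

section Ops
variable {A : Type*} [AddCommGroup A]

/-- `M_{i_t j_t}(x^t; y^t)`: the operation `M` applied to the `t`-th consecutive blocks of
the sequences `x` and `y`, as prescribed by the composition `c`. -/
def blockVal (M : ∀ p q : ℕ, (Fin p → A) → (Fin q → A) → A)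
    {k : ℕ} (c : Fin k → ℕ × ℕ) (x y : ℕ → A) (t : Fin k) : A :=
  M (c t).1 (c t).2 (fun s => x (off1 c t + s.1)) (fun s => y (off2 c t + s.1))

/-- The multibrace relation `(R_{ijk})`. -/
def Rrel (M : ∀ p q : ℕ, (Fin p → A) → (Fin q → A) → A)
    (i j k : ℕ) (x y z : ℕ → A) : Prop :=
  ∑ l ∈ Finset.Icc 1 (i + j), ∑ c ∈ Comps l i j,
      M l k (fun t : Fin l => blockVal M c x y t) (fun s : Fin k => z s.1)
    = ∑ m ∈ Finset.Icc 1 (j + k), ∑ c ∈ Comps m j k,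
        M i m (fun s : Fin i => x s.1) (fun t : Fin m => blockVal M c y z t)

/-- `ω^≻`: `omegaIter s x n = ((x₀ ≻ x₁) ≻ ⋯) ≻ x_n`. -/
def omegaIter (s : A → A → A) (x : ℕ → A) : ℕ → A
  | 0 => x 0
  | n + 1 => s (omegaIter s x n) (x (n + 1))

end Ops

section Compositions

theorem mem_Comps {k p q : ℕ} {c : Fin k → ℕ × ℕ} :
    c ∈ Comps k p q ↔
      (∑ t, (c t).1) = p ∧ (∑ t, (c t).2) = q ∧ ∀ t, 1 ≤ (c t).1 + (c t).2 := by
  simp only [Comps, mem_filter, Fintype.mem_piFinset, mem_product, mem_range,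
    and_iff_right_iff_imp]
  rintro ⟨h₁, h₂, -⟩ t
  have h₃ := single_le_sum (f := fun t => (c t).1) (fun _ _ => Nat.zero_le _) (mem_univ t)
  have h₄ := single_le_sum (f := fun t => (c t).2) (fun _ _ => Nat.zero_le _) (mem_univ t)
  omega

theorem Comps_eq_empty {k p q : ℕ} (h : p + q < k) : Comps k p q = ∅ := by
  refine eq_empty_of_forall_notMem fun c hc => ?_
  obtain ⟨h₁, h₂, h₃⟩ := mem_Comps.1 hc
  have := sum_le_sum fun t (_ : t ∈ univ) => h₃ t
  rw [sum_add_distrib, h₁, h₂] at this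
  simp at this
  omega

theorem Comps_one {p q : ℕ} (h : 1 ≤ p + q) : Comps 1 p q = {fun _ => (p, q)} := by
  ext c
  simp only [mem_Comps, mem_singleton, funext_iff, Fin.forall_fin_one, Fin.sum_univ_one,
    Prod.ext_iff]
  constructor
  · rintro ⟨h₁, h₂, -⟩
    exact ⟨h₁, h₂⟩
  · rintro ⟨h₁, h₂⟩
    exact ⟨h₁, h₂, by omega⟩

/-- Splitting off the last block of a composition. -/
theorem sum_Comps_succ {B : Type*} [AddCommMonoid B] (k p q : ℕ)
    (f : (Fin (k + 1) → ℕ × ℕ) → B) :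
    ∑ c ∈ Comps (k + 1) p q, f c =
      ∑ a ∈ (range (p + 1) ×ˢ range (q + 1)).filter (· ≠ (p, q)),
        ∑ c ∈ Comps k a.1 a.2, f (Fin.snoc c (p - a.1, q - a.2)) := by
  have hsnoc (c) (hc : c ∈ Comps (k + 1) p q) :
      (Fin.snoc (Fin.init c) (p - ∑ t, (Fin.init c t).1, q - ∑ t, (Fin.init c t).2) :
        Fin (k + 1) → ℕ × ℕ) = c := by
    obtain ⟨h₁, h₂, -⟩ := mem_Comps.1 hc
    rw [Fin.sum_univ_castSucc] at h₁ h₂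
    have h : (p - ∑ t, (Fin.init c t).1, q - ∑ t, (Fin.init c t).2) = c (Fin.last k) := by
      simp only [Fin.init, Prod.ext_iff]
      omega
    rw [h, Fin.snoc_init_self]
  rw [sum_sigma']
  refine sum_bij' (fun c _ => ⟨(∑ t, (Fin.init c t).1, ∑ t, (Fin.init c t).2), Fin.init c⟩)
    (fun d _ => Fin.snoc d.2 (p - d.1.1, q - d.1.2)) ?_ ?_ ?_ ?_ ?_
  · intro c hc
    obtain ⟨h₁, h₂, h₃⟩ := mem_Comps.1 hc
    rw [Fin.sum_univ_castSucc] at h₁ h₂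
    have h₄ := h₃ (Fin.last k)
    simp only [mem_sigma, mem_filter, mem_product, mem_range, mem_Comps, ne_eq,
      Prod.mk.injEq, Fin.init]
    exact ⟨⟨⟨by omega, by omega⟩, by omega⟩, trivial, trivial, fun t => h₃ _⟩
  · rintro ⟨⟨i, j⟩, c⟩ hc
    simp only [mem_sigma, mem_filter, mem_product, mem_range, mem_Comps, ne_eq,
      Prod.mk.injEq] at hc
    obtain ⟨⟨⟨h₁, h₂⟩, h₃⟩, h₄, h₅, h₆⟩ := hc
    simp only [mem_Comps, Fin.sum_univ_castSucc, Fin.snoc_castSucc, Fin.snoc_last,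
      Fin.forall_fin_succ']
    exact ⟨by omega, by omega, h₆, by omega⟩
  · exact hsnoc
  · rintro ⟨⟨i, j⟩, c⟩ hc
    simp only [mem_sigma, mem_Comps] at hc
    obtain ⟨-, h₄, h₅, -⟩ := hc
    simp [Fin.init_snoc, h₄, h₅]
  · exact fun c hc => congrArg f (hsnoc c hc).symm

variable {k : ℕ} (c : Fin k → ℕ × ℕ) (d : ℕ × ℕ)

theorem off1_snoc_castSucc (t : Fin k) :
    off1 (Fin.snoc c d : Fin (k + 1) → ℕ × ℕ) t.castSucc = off1 c t := by
  simp [off1, sum_filter, Fin.sum_univ_castSucc, (Fin.castSucc_lt_last t).not_gt]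

theorem off2_snoc_castSucc (t : Fin k) :
    off2 (Fin.snoc c d : Fin (k + 1) → ℕ × ℕ) t.castSucc = off2 c t := by
  simp [off2, sum_filter, Fin.sum_univ_castSucc, (Fin.castSucc_lt_last t).not_gt]

theorem off1_snoc_last :
    off1 (Fin.snoc c d : Fin (k + 1) → ℕ × ℕ) (Fin.last k) = ∑ t, (c t).1 := by
  simp [off1, sum_filter, Fin.sum_univ_castSucc, Fin.castSucc_lt_last]

theorem off2_snoc_last :
    off2 (Fin.snoc c d : Fin (k + 1) → ℕ × ℕ) (Fin.last k) = ∑ t, (c t).2 := by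
  simp [off2, sum_filter, Fin.sum_univ_castSucc, Fin.castSucc_lt_last]

end Compositions

section BlockSums

variable {A : Type*}

theorem omegaIter_congr (s : A → A → A) {x y : ℕ → A} {n : ℕ} (h : ∀ i ≤ n, x i = y i) :
    omegaIter s x n = omegaIter s y n := by
  induction n with
  | zero => exact h 0 le_rfl
  | succ n ih =>
    rw [omegaIter, omegaIter, ih fun i hi => h i (by omega), h (n + 1) le_rfl]

/-- Merging the first two arguments does not change `ω^≻`. -/
theorem omegaIter_merge (s : A → A → A) (y : ℕ → A) (n : ℕ) :
    omegaIter s (fun j => if j = 0 then s (y 0) (y 1) else y (j + 1)) n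
      = omegaIter s y (n + 1) := by
  induction n with
  | zero => simp [omegaIter]
  | succ n ih => rw [omegaIter, ih]; simp [omegaIter]

variable [AddCommGroup A] (s : A → A → A) (M : ∀ p q : ℕ, (Fin p → A) → (Fin q → A) → A)

/-- `ω^≻` of the blocks `M_{i_t j_t}(x^t; y^t)` of a composition. -/
def omegaBlocks {k : ℕ} (c : Fin k → ℕ × ℕ) (x y : ℕ → A) : A :=
  omegaIter s (fun t => if h : t < k then blockVal M c x y ⟨t, h⟩ else 0) (k - 1)

/-- The sum of `ω^≻(M_{i₁j₁}, …, M_{i_kj_k})` over all compositions with at least one block. -/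
def blockSum (p q : ℕ) (x y : ℕ → A) : A :=
  ∑ k ∈ Icc 1 (p + q), ∑ c ∈ Comps k p q, omegaBlocks s M c x y

/-- `M_{pq}` applied to the initial segments of two sequences. -/
def initM (p q : ℕ) (x y : ℕ → A) : A :=
  M p q (fun i => x i.1) (fun j => y j.1)

variable {s M}

theorem omegaBlocks_snoc {k p q : ℕ} {c : Fin (k + 1) → ℕ × ℕ} (hc : c ∈ Comps (k + 1) p q)
    (d : ℕ × ℕ) (x y : ℕ → A) :
    omegaBlocks s M (Fin.snoc c d : Fin (k + 2) → ℕ × ℕ) x y =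
      s (omegaBlocks s M c x y)
        (initM M d.1 d.2 (fun i => x (p + i)) (fun j => y (q + j))) := by
  obtain ⟨h₁, h₂, -⟩ := mem_Comps.1 hc
  have hlast : blockVal M (Fin.snoc c d : Fin (k + 2) → ℕ × ℕ) x y (Fin.last (k + 1)) =
      initM M d.1 d.2 (fun i => x (p + i)) (fun j => y (q + j)) := by
    rw [blockVal, off1_snoc_last, off2_snoc_last, h₁, h₂, Fin.snoc_last, initM]
  have hinit (t : Fin (k + 1)) :
      blockVal M (Fin.snoc c d : Fin (k + 2) → ℕ × ℕ) x y t.castSucc = blockVal M c x y t := by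
    rw [blockVal, off1_snoc_castSucc, off2_snoc_castSucc, Fin.snoc_castSucc, blockVal]
  simp only [omegaBlocks, Nat.add_sub_cancel]
  rw [omegaIter]
  congr 1
  · refine omegaIter_congr s fun t ht => ?_
    rw [dif_pos (by omega), dif_pos (by omega)]
    exact hinit ⟨t, by omega⟩
  · rw [dif_pos (by omega)]
    exact hlast

theorem sum_Icc_omegaBlocks {p q N : ℕ} (h : p + q ≤ N) (x y : ℕ → A) :
    ∑ k ∈ Icc 1 N, ∑ c ∈ Comps k p q, omegaBlocks s M c x y = blockSum s M p q x y := by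
  refine (sum_subset (Icc_subset_Icc_right h) fun k hk hk' => ?_).symm
  simp only [mem_Icc] at hk hk'
  rw [Comps_eq_empty (by omega), sum_empty]

theorem blockSum_eq_initM_add {p q : ℕ} (h : 1 ≤ p + q) (x y : ℕ → A) :
    blockSum s M p q x y = initM M p q x y +
      ∑ k ∈ Icc 2 (p + q), ∑ c ∈ Comps k p q, omegaBlocks s M c x y := by
  rw [blockSum, ← Finset.add_sum_Ioc_eq_sum_Icc h, Comps_one h, sum_singleton]
  congr 1
  simp [omegaBlocks, omegaIter, blockVal, initM, off1, off2]

theorem blockSum_zero_zero (x y : ℕ → A) : blockSum s M 0 0 x y = 0 := by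
  simp [blockSum]

end BlockSums

section Recursion

variable {K A : Type*} [Field K] [AddCommGroup A] [Module K A] {succ : A →ₗ[K] A →ₗ[K] A}
  {M : ∀ p q : ℕ, (Fin p → A) → (Fin q → A) → A}

/-- The recursion for `blockSum` obtained by splitting off the last block. -/
theorem blockSum_recursion (hM00 : ∀ x y, M 0 0 x y = 0) (p q : ℕ) (x y : ℕ → A) :
    blockSum (fun a b => succ a b) M p q x y = initM M p q x y +
      ∑ i ∈ range (p + 1), ∑ j ∈ range (q + 1),
        succ (blockSum (fun a b => succ a b) M i j x y)
          (initM M (p - i) (q - j) (fun t => x (i + t)) (fun t => y (j + t))) := by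
  rcases Nat.eq_zero_or_pos (p + q) with h | h
  · obtain ⟨rfl, rfl⟩ : p = 0 ∧ q = 0 := by omega
    simp [blockSum_zero_zero, initM, hM00]
  rw [blockSum_eq_initM_add h, ← sum_product']
  congr 1
  rw [← sum_filter_of_ne (p := (· ≠ (p, q)))]
  · obtain ⟨N, hN⟩ : ∃ N, p + q = N + 1 := ⟨p + q - 1, by omega⟩
    have hshift : ∑ k ∈ Icc 2 (p + q), ∑ c ∈ Comps k p q,
          omegaBlocks (fun a b => succ a b) M c x y =
        ∑ k ∈ Icc 1 N, ∑ c ∈ Comps (k + 1) p q,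
          omegaBlocks (fun a b => succ a b) M c x y := by
      rw [hN]
      refine (sum_nbij' (· + 1) (· - 1) ?_ ?_ ?_ ?_ fun _ _ => rfl).symm <;>
        simp only [mem_Icc] <;> omega
    rw [hshift, sum_congr rfl fun k _ => sum_Comps_succ k p q _, sum_comm]
    refine sum_congr rfl fun a ha => ?_
    obtain ⟨i, j⟩ := a
    simp only [mem_filter, mem_product, mem_range, ne_eq, Prod.mk.injEq] at ha
    rw [← sum_Icc_omegaBlocks (N := N) (by omega), map_sum, LinearMap.sum_apply]
    refine sum_congr rfl fun k hk => ?_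
    obtain ⟨k, rfl⟩ : ∃ l, k = l + 1 := ⟨k - 1, by have := mem_Icc.1 hk; omega⟩
    rw [map_sum, LinearMap.sum_apply]
    exact sum_congr rfl fun c hc => omegaBlocks_snoc hc _ x y
  · rintro a - ha rfl
    simp only [Nat.sub_self] at ha
    simp [initM, hM00] at ha

theorem blockSum_succ_zero (hM00 : ∀ x y, M 0 0 x y = 0) (hM10 : ∀ x y, M 1 0 x y = x 0)
    (hMp0 : ∀ p, 2 ≤ p → ∀ x y, M p 0 x y = 0) (p : ℕ) (x y : ℕ → A) :
    blockSum (fun a b => succ a b) M (p + 1) 0 x y =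
      omegaIter (fun a b => succ a b) x p := by
  induction p with
  | zero =>
    rw [blockSum_recursion hM00]
    simp [sum_range_succ, blockSum_zero_zero, initM, hM00, hM10, omegaIter]
  | succ p ih =>
    rw [blockSum_recursion hM00, sum_range_succ, sum_range_succ, sum_eq_zero]
    · rw [Nat.add_sub_cancel_left, Nat.sub_self]
      simp [initM, hM00, hM10, hMp0, ih, omegaIter]
    · intro i hi
      have := mem_range.1 hi
      simp [initM, hMp0 (p + 1 + 1 - i) (by omega)]

theorem blockSum_zero_succ (hM00 : ∀ x y, M 0 0 x y = 0) (hM01 : ∀ x y, M 0 1 x y = y 0)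
    (hM0q : ∀ q, 2 ≤ q → ∀ x y, M 0 q x y = 0) (q : ℕ) (x y : ℕ → A) :
    blockSum (fun a b => succ a b) M 0 (q + 1) x y =
      omegaIter (fun a b => succ a b) y q := by
  induction q with
  | zero =>
    rw [blockSum_recursion hM00]
    simp [sum_range_succ, blockSum_zero_zero, initM, hM00, hM01, omegaIter]
  | succ q ih =>
    rw [blockSum_recursion hM00, sum_range_one, sum_range_succ, sum_range_succ, sum_eq_zero]
    · rw [Nat.add_sub_cancel_left, Nat.sub_self (q + 1 + 1)]
      simp [initM, hM00, hM01, hM0q, ih, omegaIter]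
    · intro j hj
      have := mem_range.1 hj
      simp [initM, hM0q (q + 1 + 1 - j) (by omega)]

end Recursion

/-- For the multibrace operations `M_{pq}` induced on a dipterous algebra,
`M_{nm}(x₁,…,x_n; y₁,…,y_m)
  = M_{n(m-1)}(x₁,…,x_n; (y₁≻y₂), y₃,…,y_m) − y₁ ≻ M_{n(m-1)}(x₁,…,x_n; y₂,…,y_m)`
for all `n ≥ 1` and `m ≥ 2`. -/
theorem dipterous_Mnm_identity (K A : Type*) [Field K] [AddCommGroup A] [Module K A]
    (star succ : A →ₗ[K] A →ₗ[K] A)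
    (hstar : ∀ x y z : A, star (star x y) z = star x (star y z))
    (hdipt : ∀ x y z : A, succ (star x y) z = succ x (succ y z))
    (M : ∀ p q : ℕ, (Fin p → A) → (Fin q → A) → A)
    (hM00 : ∀ x y, M 0 0 x y = 0)
    (hM10 : ∀ x y, M 1 0 x y = x 0)
    (hM01 : ∀ x y, M 0 1 x y = y 0)
    (hMp0 : ∀ p, 2 ≤ p → ∀ x y, M p 0 x y = 0)
    (hM0q : ∀ q, 2 ≤ q → ∀ x y, M 0 q x y = 0)
    (hMrec : ∀ p q : ℕ, 1 ≤ p → 1 ≤ q → ∀ x y : ℕ → A,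
      M p q (fun i : Fin p => x i.1) (fun i : Fin q => y i.1)
        = star (omegaIter (fun a b => succ a b) x (p - 1))
            (omegaIter (fun a b => succ a b) y (q - 1))
          - ∑ k ∈ Finset.Icc 2 (p + q), ∑ c ∈ Comps k p q,
              omegaIter (fun a b => succ a b)
                (fun t => if h : t < k then blockVal M c x y ⟨t, h⟩ else 0) (k - 1)) :
    ∀ n m : ℕ, 1 ≤ n → 2 ≤ m → ∀ x y : ℕ → A,
      M n m (fun i : Fin n => x i.1) (fun j : Fin m => y j.1)
        = M n (m - 1) (fun i : Fin n => x i.1)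
            (fun j : Fin (m - 1) => if j.1 = 0 then succ (y 0) (y 1) else y (j.1 + 1))
          - succ (y 0)
              (M n (m - 1) (fun i : Fin n => x i.1)
                (fun j : Fin (m - 1) => y (j.1 + 1))) := by
  have hT0 := blockSum_succ_zero (succ := succ) hM00 hM10 hMp0
  have h0T := blockSum_zero_succ (succ := succ) hM00 hM01 hM0q
  have hTT (p q : ℕ) (x y : ℕ → A) : blockSum (fun a b => succ a b) M (p + 1) (q + 1) x y =
      star (omegaIter (fun a b => succ a b) x p) (omegaIter (fun a b => succ a b) y q) := by
    rw [blockSum_eq_initM_add (by omega), initM, hMrec _ _ (by omega) (by omega)]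
    simp [omegaBlocks]
  -- the identity also holds for `n = 0`, which starts the induction on `n`
  have key (r n : ℕ) (x y : ℕ → A) : initM M n (r + 2) x y =
      initM M n (r + 1) x (fun j => if j = 0 then succ (y 0) (y 1) else y (j + 1))
        - succ (y 0) (initM M n (r + 1) x (fun j => y (j + 1))) := by
    induction n using Nat.strong_induction_on generalizing x with
    | _ n ih =>
    rcases n with _ | n
    · rcases r with _ | r
      · simp [initM, hM01, hM0q]
      · simp [initM, hM0q]
    set z : ℕ → A := fun j => if j = 0 then succ (y 0) (y 1) else y (j + 1) with hz
    have hω (j : ℕ) : omegaIter (fun a b => succ a b) z j =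
        omegaIter (fun a b => succ a b) y (j + 1) :=
      omegaIter_merge (fun a b => succ a b) y j
    have hmerge (i j : ℕ) : blockSum (fun a b => succ a b) M i (j + 2) x y =
        blockSum (fun a b => succ a b) M i (j + 1) x z := by
      rcases i with _ | i
      · rw [h0T, h0T, hω]
      · rw [hTT, hTT, hω]
    have hy := blockSum_recursion (succ := succ) hM00 (n + 1) (r + 2) x y
    have hyz := blockSum_recursion (succ := succ) hM00 (n + 1) (r + 1) x z
    rw [hmerge] at hy
    have hrow (i : ℕ) :
        (∑ j ∈ range (r + 2 + 1), succ (blockSum (fun a b => succ a b) M i j x y)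
          (initM M (n + 1 - i) (r + 2 - j) (fun t => x (i + t)) (fun t => y (j + t)))) =
        (∑ j ∈ range (r + 1 + 1), succ (blockSum (fun a b => succ a b) M i j x z)
          (initM M (n + 1 - i) (r + 1 - j) (fun t => x (i + t)) (fun t => z (j + t)))) +
        if i = 0 then succ (y 0) (initM M (n + 1) (r + 1) x (fun j => y (j + 1))) else 0 := by
      rw [sum_range_succ', sum_range_succ', sum_range_succ' _ (r + 1), add_assoc, add_assoc]
      congr 1
      · refine sum_congr rfl fun j _ => ?_
        rw [hmerge, show r + 2 - (j + 1 + 1) = r + 1 - (j + 1) by omega]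
        congr 3
        funext t
        simp only [hz]
        rw [if_neg (by omega)]
        congr 1
        omega
      · rcases i with _ | i
        · simp [blockSum_zero_zero, h0T, omegaIter, add_comm]
        · have hih := ih (n - i) (by omega) (fun t => x (i + 1 + t))
          have hy1 : (fun t => y (1 + t)) = fun t => y (t + 1) := by simp only [add_comm]
          simp only [zero_add, hTT, hT0, omegaIter, hdipt, Nat.sub_zero, hy1,
            Nat.reduceSubDiff, Nat.succ_ne_zero, if_false]
          rw [hih, map_sub]
          abel
    rw [sum_congr rfl fun i _ => hrow i, sum_add_distrib, sum_ite_eq', if_pos (by simp)] at hy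
    rw [hyz, add_comm (∑ i ∈ _, _), ← add_assoc] at hy
    exact eq_sub_of_add_eq (add_right_cancel hy).symm
  rintro n m hn hm x y
  obtain ⟨r, rfl⟩ : ∃ r, m = r + 2 := ⟨m - 2, by omega⟩
  exact key r n x y
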